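/- R_3(B(K_3), 5) = 7, R_3(B(K_3), 6) = 8, and R_3(B(K_3), 8) = 9. -/

import Mathlib

/-!
The upper bounds come from the inequality `8 * #F ≤ n ^ 2` for every family `F` of triples on `n`
points without a Berge triangle (`eight_mul_card_le`). In such a family each triple has a vertex,
its *apex*, such that the two pairs of the triple through the apex lie in no other member of `F`
(`exists_apex`): if two pairs of `{a, b, c}` both lay in further triples, these two triples together
with `{a, b, c}` itself would be a Berge triangle, so at most one pair does, and the vertex off it is
an apex. The graph formed by all pairs through apexes
has `2 * #F` edges and is triangle-free, so Mantel's theorem applies. Pigeonhole then finishes: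
`5 * 6 < 35`, `6 * 8 < 56` and `8 * 10 < 84`.

For the lower bounds, an involution `p` defines the class of all triples `{a, b, p b}` with
`p a = a` and `p b ≠ b`. No such class contains a Berge triangle (`not_bergeIn_invClass`): a pair in
a triple of the class is either a fixed point and a moved point, which determine the triple, or an
orbit of `p`. It then suffices to cover all triples of a `6`-, `7`- and `8`-set by the classes of
`5`, `6` and `8` involutions respectively.
-/

open SimpleGraph

/-- A set family `A` of hyperedges contains a Berge-`G` hypergraph. -/
def BergeIn {V α : Type} (G : SimpleGraph V) (A : Set (Finset α)) : Prop :=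
  ∃ φ : V → α, Function.Injective φ ∧
    ∃ ψ : G.edgeSet → Finset α, Function.Injective ψ ∧
      (∀ e, ψ e ∈ A) ∧
      ∀ (e : G.edgeSet), ∀ x ∈ (e : Sym2 V), φ x ∈ ψ e

/-- Every `k`-coloring of the `r`-element subsets of an `n`-element set contains a
monochromatic Berge-`G`. -/
def BergeRamseyProp {V : Type} (G : SimpleGraph V) (r k n : ℕ) : Prop :=
  ∀ c : Finset (Fin n) → Fin k, ∃ i : Fin k,
    BergeIn G {s : Finset (Fin n) | s.card = r ∧ c s = i}

/-- `R_r(𝓑(G), k)`. -/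
noncomputable def bergeRamsey {V : Type} (G : SimpleGraph V) (r k : ℕ) : ℕ :=
  sInf {n | BergeRamseyProp G r k n}

/-- The triangle `K₃`. -/
def K3 : SimpleGraph (Fin 3) := ⊤

namespace BergeTriangle

/-! ### Berge triangles as triples of hyperedges -/

/-- Three distinct members `r`, `s`, `t` of `A` through the pairs `ab`, `ac`, `bc` form a Berge
triangle. -/
lemma bergeIn_K3_of {α : Type} {A : Set (Finset α)} {a b c : α} {r s t : Finset α}
    (hab : a ≠ b) (hac : a ≠ c) (hbc : b ≠ c)
    (hr : r ∈ A) (hs : s ∈ A) (ht : t ∈ A) (hrs : r ≠ s) (hrt : r ≠ t) (hst : s ≠ t)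
    (har : a ∈ r) (hbr : b ∈ r) (has : a ∈ s) (hcs : c ∈ s) (hbt : b ∈ t) (hct : c ∈ t) :
    BergeIn K3 A := by
  refine ⟨![a, b, c], ?_, fun e => if (2 : Fin 3) ∉ (e : Sym2 (Fin 3)) then r
    else if (1 : Fin 3) ∉ (e : Sym2 (Fin 3)) then s else t, ?_, ?_, ?_⟩
  · intro i j h
    fin_cases i <;> fin_cases j <;> simp_all
  · rintro ⟨e, he⟩ ⟨f, hf⟩ h
    induction e with | _ i j
    induction f with | _ k l
    have hij : i ≠ j := by simpa [K3] using he
    have hkl : k ≠ l := by simpa [K3] using hf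
    fin_cases i <;> fin_cases j <;> fin_cases k <;> fin_cases l <;>
      simp_all [Sym2.eq_swap, Ne.symm hrs, Ne.symm hrt, Ne.symm hst]
  · intro e
    dsimp only
    split_ifs <;> assumption
  · rintro ⟨e, he⟩ x hx
    induction e with | _ i j
    fin_cases i <;> fin_cases j <;> fin_cases x <;> simp_all

lemma of_bergeIn_K3 {α : Type} {A : Set (Finset α)} (h : BergeIn K3 A) :
    ∃ a b c : α, ∃ r ∈ A, ∃ s ∈ A, ∃ t ∈ A, a ≠ b ∧ a ≠ c ∧ b ≠ c ∧ r ≠ s ∧ r ≠ t ∧ s ≠ t ∧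
      a ∈ r ∧ b ∈ r ∧ a ∈ s ∧ c ∈ s ∧ b ∈ t ∧ c ∈ t := by
  obtain ⟨φ, hφ, ψ, hψ, hA, hmem⟩ := h
  have e01 : s((0 : Fin 3), 1) ∈ K3.edgeSet := by simp [K3]
  have e02 : s((0 : Fin 3), 2) ∈ K3.edgeSet := by simp [K3]
  have e12 : s((1 : Fin 3), 2) ∈ K3.edgeSet := by simp [K3]
  refine ⟨φ 0, φ 1, φ 2, ψ ⟨_, e01⟩, hA _, ψ ⟨_, e02⟩, hA _, ψ ⟨_, e12⟩, hA _,
    hφ.ne (by decide), hφ.ne (by decide), hφ.ne (by decide), hψ.ne ?_, hψ.ne ?_, hψ.ne ?_,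
    hmem _ _ ?_, hmem _ _ ?_, hmem _ _ ?_, hmem _ _ ?_, hmem _ _ ?_, hmem _ _ ?_⟩ <;>
  simp

/-! ### The extremal bound -/

section Extremal

variable {α : Type} [DecidableEq α]

/-- `v` is an apex of the member `t` of `F`: both pairs of `t` through `v` lie in no other member
of `F`. -/
def IsApex (F : Finset (Finset α)) (t : Finset α) (v : α) : Prop :=
  v ∈ t ∧ ∀ u ∈ t, u ≠ v → ∀ s ∈ F, u ∈ s → v ∈ s → s = t

lemma exists_apex {F : Finset (Finset α)} (h3 : ∀ s ∈ F, s.card = 3)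
    (hF : ¬ BergeIn K3 (F : Set (Finset α))) {t : Finset α} (ht : t ∈ F) :
    ∃ v, IsApex F t v := by
  obtain ⟨a, b, c, hab, hac, hbc, rfl⟩ := Finset.card_eq_three.1 (h3 t ht)
  -- Two further members through two pairs of `{x, y, z}` differ: a common one would contain it.
  have key : ∀ x y z, x ≠ y → x ≠ z → y ≠ z → ({a, b, c} : Finset α) = {x, y, z} →
      ∀ r ∈ F, x ∈ r → y ∈ r → ∀ s ∈ F, x ∈ s → z ∈ s → r ≠ {a, b, c} → s ≠ {a, b, c} → False := by
    intro x y z hxy hxz hyz hxyz r hr hxr hyr s hs hxs hzs hrt hst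
    refine hF (bergeIn_K3_of hxy hxz hyz hr hs ht ?_ hrt hst hxr hyr hxs hzs
      (by simp [hxyz]) (by simp [hxyz]))
    rintro rfl
    refine hrt (Finset.eq_of_subset_of_card_le ?_ ?_).symm
    · rw [hxyz]
      simp [Finset.insert_subset_iff, *]
    · rw [h3 _ hr, h3 _ ht]
  by_contra hno
  have hpair : ∀ v ∈ ({a, b, c} : Finset α), ∃ u ∈ ({a, b, c} : Finset α), u ≠ v ∧
      ∃ s ∈ F, u ∈ s ∧ v ∈ s ∧ s ≠ {a, b, c} := by
    intro v hv
    by_contra hcon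
    push Not at hcon
    exact hno ⟨v, hv, hcon⟩
  obtain ⟨ua, hua, hua', ra, hra, h1a, h2a, h3a⟩ := hpair a (by simp)
  obtain ⟨ub, hub, hub', rb, hrb, h1b, h2b, h3b⟩ := hpair b (by simp)
  obtain ⟨uc, huc, huc', rc, hrc, h1c, h2c, h3c⟩ := hpair c (by simp)
  have ka := key a b c hab hac hbc rfl
  have kb := key b a c hab.symm hbc hac (Finset.insert_comm a b {c})
  have kc := key c a b hac.symm hbc.symm hab
    (by rw [Finset.pair_comm b c, Finset.insert_comm])
  simp only [Finset.mem_insert, Finset.mem_singleton] at hua hub huc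
  grind

/-- A family of triples on `n` points without a Berge triangle has at most `n ^ 2 / 8` members:
the pairs through the apexes form a triangle-free graph with two edges per member. -/
theorem eight_mul_card_le [Fintype α] {F : Finset (Finset α)} (h3 : ∀ s ∈ F, s.card = 3)
    (hF : ¬ BergeIn K3 (F : Set (Finset α))) : 8 * F.card ≤ Fintype.card α ^ 2 := by
  classical
  rcases isEmpty_or_nonempty α with hα | hα
  · have hF0 : F = ∅ := Finset.eq_empty_of_forall_notMem fun s hs => by
      have := h3 s hs
      simp [Finset.eq_empty_of_isEmpty s] at this
    simp [hF0]
  choose! p hp using fun t (ht : t ∈ F) => exists_apex h3 hF ht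
  let G : SimpleGraph α :=
    { Adj := fun x y => x ≠ y ∧ ∃ t ∈ F, x ∈ t ∧ y ∈ t ∧ (p t = x ∨ p t = y)
      symm := ⟨by grind⟩
      loopless := ⟨by grind⟩ }
  have hlight : ∀ t ∈ F, ∀ s ∈ F, ∀ x y, x ≠ y → x ∈ t → y ∈ t → (p t = x ∨ p t = y) →
      x ∈ s → y ∈ s → s = t := by
    intro t ht s hs x y hxy hxt hyt hpt hxs hys
    rcases hpt with rfl | rfl
    · exact (hp t ht).2 y hyt hxy.symm s hs hys hxs
    · exact (hp t ht).2 x hxt hxy s hs hxs hys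
  have hfree : G.CliqueFree 3 := by
    intro q hq
    obtain ⟨a, b, c, ⟨hab, r, hr, har, hbr, hpr⟩, ⟨hac, s, hs, has, hcs, hps⟩,
      ⟨hbc, t, ht, hbt, hct, hpt⟩, -⟩ := SimpleGraph.is3Clique_iff.1 hq
    -- If two of the triples agree, they contain the third pair too, so all three agree, and then
    -- the apex would have to lie on all three sides of the triangle `a b c`.
    have hrs : r ≠ s := by
      rintro rfl
      have := hlight t ht r hr b c hbc hbt hct hpt hbr hcs
      grind
    have hrt : r ≠ t := by
      rintro rfl
      have := hlight s hs r hr a c hac has hcs hps har hct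
      grind
    have hst : s ≠ t := by
      rintro rfl
      have := hlight r hr s hs a b hab har hbr hpr has hbt
      grind
    exact hF (bergeIn_K3_of hab hac hbc hr hs ht hrs hrt hst har hbr has hcs hbt hct)
  have hedges : 2 * F.card ≤ G.edgeFinset.card := by
    have hsub : F.biUnion (fun t => (t.erase (p t)).image fun u => s(p t, u)) ⊆ G.edgeFinset := by
      intro e he
      simp only [Finset.mem_biUnion, Finset.mem_image, Finset.mem_erase] at he
      obtain ⟨t, ht, u, ⟨hu, hut⟩, rfl⟩ := he
      rw [SimpleGraph.mem_edgeFinset, SimpleGraph.mem_edgeSet]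
      exact ⟨hu.symm, t, ht, (hp t ht).1, hut, Or.inl rfl⟩
    refine le_trans (le_of_eq ?_) (Finset.card_le_card hsub)
    rw [Finset.card_biUnion]
    · rw [mul_comm, Finset.sum_const_nat]
      intro t ht
      rw [Finset.card_image_of_injective _ (fun u v h => Sym2.congr_right.1 h),
        Finset.card_erase_of_mem (hp t ht).1, h3 t ht]
    · intro s hs t ht hst
      rw [Function.onFun_apply, Finset.disjoint_left]
      intro e he he'
      simp only [Finset.mem_image, Finset.mem_erase] at he he'
      obtain ⟨u, ⟨hu, hus⟩, rfl⟩ := he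
      obtain ⟨v, ⟨hv, hvt⟩, he⟩ := he'
      have h1 := (hp t ht).1
      refine hst (hlight t ht s hs (p t) v hv.symm h1 hvt (Or.inl rfl) ?_ ?_) <;>
      · have := (hp s hs).1
        grind
  have hmantel := hfree.card_edgeFinset_le (r := 2)
  dsimp only at hmantel
  have hmod : (Fintype.card α % 2).choose 2 = 0 := Nat.choose_eq_zero_of_lt (Nat.mod_lt _ two_pos)
  rw [hmod] at hmantel
  omega

end Extremal

/-- Pigeonhole: some colour class has more than `n ^ 2 / 8` of the triples. -/
lemma bergeRamseyProp_of_lt {n k : ℕ} (h : k * (n ^ 2 / 8) < n.choose 3) :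
    BergeRamseyProp K3 3 k n := by
  intro c
  obtain ⟨i, -, hi⟩ := Finset.exists_lt_card_fiber_of_mul_lt_card_of_maps_to
    (s := Finset.powersetCard 3 (Finset.univ : Finset (Fin n))) (t := (Finset.univ : Finset (Fin k)))
    (f := c) (n := n ^ 2 / 8) (fun _ _ => Finset.mem_univ _) (by simpa using h)
  refine ⟨i, ?_⟩
  by_contra hno
  have := eight_mul_card_le
    (F := {s ∈ Finset.powersetCard 3 (Finset.univ : Finset (Fin n)) | c s = i})
    (by simp +contextual) (by convert hno using 2; ext s; simp)
  rw [Fintype.card_fin] at this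
  omega

/-! ### Colourings from involutions -/

/-- The class of triples attached to an involution `p`: those of the form `{a, b, p b}` with
`p a = a` and `p b ≠ b`. -/
def invClass {α : Type} [DecidableEq α] (p : Equiv.Perm α) : Set (Finset α) :=
  {s | ∃ a b, p a = a ∧ p b ≠ b ∧ s = {a, b, p b}}

lemma not_bergeIn_invClass {α : Type} [DecidableEq α] {p : Equiv.Perm α}
    (hp : ∀ x, p (p x) = x) : ¬ BergeIn K3 (invClass p) := by
  have key : ∀ s ∈ invClass p, ∀ u ∈ s, ∀ v ∈ s, u ≠ v →
      (p u = u ∧ p v ≠ v ∧ s = {u, v, p v}) ∨ (p v = v ∧ p u ≠ u ∧ s = {v, u, p u}) ∨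
      (p u ≠ u ∧ p v ≠ v ∧ p u = v) := by
    rintro s ⟨a, b, ha, hb, rfl⟩ u hu v hv huv
    have := hp b
    simp only [Finset.mem_insert, Finset.mem_singleton] at hu hv
    rcases hu with rfl | rfl | rfl <;> rcases hv with rfl | rfl | rfl <;> grind
  intro h
  obtain ⟨a, b, c, r, hr, s, hs, t, ht, hab, hac, hbc, hrs, hrt, hst, har, hbr, has, hcs, hbt, hct⟩
    := of_bergeIn_K3 h
  have h1 := key r hr a har b hbr hab
  have h2 := key s hs a has c hcs hac
  have h3 := key t ht b hbt c hct hbc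
  have := hp a
  have := hp b
  have := hp c
  rcases h1 with h1 | h1 | h1 <;> rcases h2 with h2 | h2 | h2 <;> rcases h3 with h3 | h3 | h3 <;>
    grind

lemma BergeIn.mono {V α : Type} {G : SimpleGraph V} {A B : Set (Finset α)} (h : BergeIn G A)
    (hAB : A ⊆ B) : BergeIn G B := by
  obtain ⟨φ, hφ, ψ, hψ, hA, hmem⟩ := h
  exact ⟨φ, hφ, ψ, hψ, fun e => hAB (hA e), hmem⟩

/-- If the classes of `k` involutions cover all triples, then colouring each triple by an involution
whose class contains it leaves no monochromatic Berge triangle. -/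
lemma not_bergeRamseyProp_of_cover {n k : ℕ} [NeZero k] (p : Fin k → Equiv.Perm (Fin n))
    (hp : ∀ i x, p i (p i x) = x)
    (hcov : ∀ x y z, x ≠ y → x ≠ z → y ≠ z → ∃ i, (p i x = x ∧ p i y = z) ∨
      (p i y = y ∧ p i x = z) ∨ (p i z = z ∧ p i x = y)) :
    ¬ BergeRamseyProp K3 3 k n := by
  have hex : ∀ s : Finset (Fin n), ∃ i, s.card = 3 → s ∈ invClass (p i) := by
    intro s
    by_cases hs : s.card = 3
    · obtain ⟨x, y, z, hxy, hxz, hyz, rfl⟩ := Finset.card_eq_three.1 hs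
      obtain ⟨i, h | h | h⟩ := hcov x y z hxy hxz hyz
      · exact ⟨i, fun _ => ⟨x, y, by grind⟩⟩
      · exact ⟨i, fun _ => ⟨y, x, by grind⟩⟩
      · exact ⟨i, fun _ => ⟨z, x, by grind⟩⟩
    · exact ⟨0, fun h => absurd h hs⟩
  choose c hc using hex
  intro h
  obtain ⟨i, hi⟩ := h c
  refine not_bergeIn_invClass (hp i) (BergeIn.mono hi ?_)
  rintro s ⟨hs, rfl⟩
  exact hc s hs

/-! ### Evaluating the infimum -/

lemma BergeRamseyProp.mono {V : Type} {G : SimpleGraph V} {r k m n : ℕ}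
    (h : BergeRamseyProp G r k m) (hmn : m ≤ n) : BergeRamseyProp G r k n := by
  intro c
  obtain ⟨i, φ, hφ, ψ, hψ, hA, hmem⟩ := h fun s => c (s.map (Fin.castLEEmb hmn))
  refine ⟨i, fun v => Fin.castLEEmb hmn (φ v), (Fin.castLEEmb hmn).injective.comp hφ,
    fun e => (ψ e).map (Fin.castLEEmb hmn), (Finset.map_injective _).comp hψ, ?_, ?_⟩
  · intro e
    exact ⟨by rw [Finset.card_map]; exact (hA e).1, (hA e).2⟩
  · intro e x hx
    exact Finset.mem_map_of_mem _ (hmem e x hx)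

lemma bergeRamsey_eq {V : Type} {G : SimpleGraph V} {r k n : ℕ}
    (hlow : ¬ BergeRamseyProp G r k n) (hup : BergeRamseyProp G r k (n + 1)) :
    bergeRamsey G r k = n + 1 := by
  refine le_antisymm (Nat.sInf_le hup) (le_csInf ⟨_, hup⟩ fun m hm => ?_)
  by_contra hlt
  exact hlow (BergeRamseyProp.mono hm (by omega))

end BergeTriangle

open BergeTriangle Equiv

/-- `R₃(𝓑(K₃), 5) = 7`, `R₃(𝓑(K₃), 6) = 8` and `R₃(𝓑(K₃), 8) = 9`. -/
theorem bergeRamsey_K3_small2 :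
    bergeRamsey K3 3 5 = 7 ∧ bergeRamsey K3 3 6 = 8 ∧ bergeRamsey K3 3 8 = 9 := by
  refine ⟨bergeRamsey_eq ?_ (bergeRamseyProp_of_lt (n := 7) (by decide)),
    bergeRamsey_eq ?_ (bergeRamseyProp_of_lt (n := 8) (by decide)),
    bergeRamsey_eq ?_ (bergeRamseyProp_of_lt (n := 9) (by decide))⟩
  · exact not_bergeRamseyProp_of_cover
      ![swap 1 2, swap 1 3 * swap 2 4, swap 1 4 * swap 2 3, swap 0 5, swap 3 4]
      (by decide +kernel) (by decide +kernel)
  · exact not_bergeRamseyProp_of_cover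
      ![swap 1 2 * swap 5 6, swap 1 3 * swap 2 5, swap 0 4, swap 1 5 * swap 3 6,
        swap 1 6 * swap 2 3, swap 2 6 * swap 3 5]
      (by decide +kernel) (by decide +kernel)
  · exact not_bergeRamseyProp_of_cover
      ![swap 1 2 * swap 6 7, swap 1 3 * swap 2 4, swap 1 4 * swap 2 3, swap 0 5 * swap 3 4,
        swap 0 6 * swap 5 7, swap 0 7 * swap 5 6, swap 3 4 * swap 6 7, swap 0 5 * swap 1 2]
      (by decide +kernel) (by decide +kernel)
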